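/- arXiv:2511.22165 — 2 statements merged into one kernel-verified Lean document; each statement's English description precedes it below -/
import Mathlib

section
/- Let p ≥ 1 and 1 ≤ r ≤ q < ∞, let {X_k}_{k≥1} and {Y_k}_{k≥1} be sequences of Banach spaces, and for each k let T_k : X_k → Y_k be an r-summing operator. If the sequence {π_r(T_k)}_{k≥1} belongs to ℓ^r, then the block-diagonal operator T : {x_k} ↦ {T_k(x_k)}, from the ℓ^p-direct sum ⊕_{ℓ^p} X_k to the ℓ^q-direct sum ⊕_{ℓ^q} Y_k, is r-summing, and π_r(T) ≤ (∑_{k=1}^∞ π_r(T_k)^r)^{1/r}. -/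
open MeasureTheory Metric Filter Complex
open scoped ENNReal NNReal BigOperators ComplexConjugate

noncomputable section

/-- `ℂⁿ` with the Euclidean norm. -/
abbrev En (n : ℕ) := EuclideanSpace ℂ (Fin n)

instance (n : ℕ) : InnerProductSpace ℝ (En n) := InnerProductSpace.complexToReal
instance (n : ℕ) : MeasurableSpace (En n) := borel _
instance (n : ℕ) : BorelSpace (En n) := ⟨rfl⟩
instance (n : ℕ) : FiniteDimensional ℝ (En n) := Module.Finite.trans ℂ (En n)

/-- The open unit ball `𝔹ₙ`. -/
def unitBall (n : ℕ) : Set (En n) := Metric.ball 0 1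

/-- The Hermitian pairing `⟨z,w⟩ = ∑ zⱼ conj wⱼ`. -/
def herm {n : ℕ} (z w : En n) : ℂ := ∑ j, z j * conj (w j)

/-- Normalized Lebesgue volume measure on `𝔹ₙ` (total mass 1). -/
def vMeas (n : ℕ) : Measure (En n) :=
  (volume (Metric.ball (0 : En n) 1))⁻¹ • volume.restrict (Metric.ball 0 1)

/-- The normalizing constant `c_α = Γ(n+1+α)/(n!·Γ(α+1))`. -/
def volConst (n : ℕ) (α : ℝ) : ℝ :=
  Real.Gamma (n + 1 + α) / ((n.factorial : ℝ) * Real.Gamma (α + 1))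

/-- The weighted measure `dv_α = c_α (1-|z|²)^α dv`. -/
def wMeas (n : ℕ) (α : ℝ) : Measure (En n) :=
  (vMeas n).withDensity fun z => ENNReal.ofReal (volConst n α * (1 - ‖z‖ ^ 2) ^ α)

-- The Möbius involution `φ_z` of `𝔹ₙ` interchanging `z` and `0`, evaluated at `w`.
open scoped Classical in
def mobius {n : ℕ} (z w : En n) : En n :=
  if z = 0 then -w
  else
    (1 - herm w z)⁻¹ •
      (z - (herm w z / herm z z) • z -
        ((Real.sqrt (1 - ‖z‖ ^ 2) : ℝ) : ℂ) • (w - (herm w z / herm z z) • z))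

/-- The Bergman metric on `𝔹ₙ`. -/
def bergmanDist {n : ℕ} (z w : En n) : ℝ :=
  (1 / 2) * Real.log ((1 + ‖mobius z w‖) / (1 - ‖mobius z w‖))

/-- The Bergman metric ball `B(z,r)`. -/
def bergmanBall {n : ℕ} (z : En n) (r : ℝ) : Set (En n) :=
  {w | w ∈ unitBall n ∧ bergmanDist z w < r}

/-- The Möbius invariant measure `dλ(z) = (1-|z|²)^{-(n+1)} dv(z)`. -/
def invMeas (n : ℕ) : Measure (En n) :=
  (vMeas n).withDensity fun z => ENNReal.ofReal ((1 - ‖z‖ ^ 2) ^ (-(n + 1 : ℝ)))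

/-- A sequence in `𝔹ₙ` which is separated (with separation constant `ε`)
in the Bergman metric. -/
def IsSeparated {n : ℕ} (a : ℕ → En n) (ε : ℝ) : Prop :=
  (∀ k, a k ∈ unitBall n) ∧ ∀ i j, i ≠ j → ε ≤ bergmanDist (a i) (a j)

/-- A `δ`-lattice in the Bergman metric. -/
def IsLattice {n : ℕ} (a : ℕ → En n) (δ : ℝ) : Prop :=
  (∀ k, a k ∈ unitBall n) ∧
    (∀ z ∈ unitBall n, ∃ k, z ∈ bergmanBall (a k) δ) ∧
      ∀ i j, i ≠ j → Disjoint (bergmanBall (a i) (δ / 4)) (bergmanBall (a j) (δ / 4))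

/-- `T` satisfies the `(r,s)`-summing inequality with constant `C`. -/
def SummingBoundWith (r s : ℝ) {X Y : Type*} [NormedAddCommGroup X] [NormedSpace ℂ X]
    [NormedAddCommGroup Y] (T : X → Y) (C : ℝ) : Prop :=
  ∀ (m : ℕ) (x : Fin m → X),
    (∑ k, ‖T (x k)‖ ^ r) ^ (1 / r) ≤
      C * ⨆ φ : {φ : X →L[ℂ] ℂ // ‖φ‖ ≤ 1}, (∑ k, ‖φ.1 (x k)‖ ^ s) ^ (1 / s)

/-- `T` is `(r,s)`-summing. -/
def IsSummingRS (r s : ℝ) {X Y : Type*} [NormedAddCommGroup X] [NormedSpace ℂ X]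
    [NormedAddCommGroup Y] (T : X → Y) : Prop :=
  ∃ C, 0 ≤ C ∧ SummingBoundWith r s T C

/-- The `(r,s)`-summing norm `π_{r,s}(T)`. -/
def summingNorm (r s : ℝ) {X Y : Type*} [NormedAddCommGroup X] [NormedSpace ℂ X]
    [NormedAddCommGroup Y] (T : X → Y) : ℝ :=
  sInf {C | 0 ≤ C ∧ SummingBoundWith r s T C}

/-- The subspace of `Lp` consisting of (a.e. classes of) functions having a representative
holomorphic on `Ω`. -/
def holoSubmodule (n : ℕ) (p : ℝ≥0∞) [Fact (1 ≤ p)] (Ω : Set (En n)) (μ : Measure (En n)) :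
    Submodule ℂ (Lp ℂ p μ) where
  carrier := {f | ∃ g : En n → ℂ, DifferentiableOn ℂ g Ω ∧ (f : En n → ℂ) =ᵐ[μ] g}
  zero_mem' := ⟨fun _ => 0, differentiableOn_const 0, Lp.coeFn_zero ℂ p μ⟩
  add_mem' := by
    rintro f f' ⟨g, hg, hfg⟩ ⟨g', hg', hfg'⟩
    exact ⟨g + g', hg.add hg', (Lp.coeFn_add f f').trans (hfg.add hfg')⟩
  smul_mem' := by
    rintro c f ⟨g, hg, hfg⟩
    exact ⟨c • g, hg.const_smul c, (Lp.coeFn_smul c f).trans (hfg.const_smul c)⟩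

/-- The weighted Bergman space `A^p_α` as a subspace of `L^p(dv_α)`. -/
abbrev BergmanSpace (n : ℕ) (p α : ℝ) [Fact (1 ≤ ENNReal.ofReal p)] :=
  ↥(holoSubmodule n (ENNReal.ofReal p) (unitBall n) (wMeas n α))

/-- The kernel `H_{p,z}(w) = (1-⟨z,w⟩)^{-b}`. -/
def Hker {n : ℕ} (b : ℝ) (z : En n) : En n → ℂ := fun w => (1 - herm z w) ^ (-(b : ℂ))

/-- The `L^p(dv_α)` norm of a function. -/
def lpNormOn (n : ℕ) (p α : ℝ) (g : En n → ℂ) : ℝ :=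
  (∫ w, ‖g w‖ ^ p ∂wMeas n α) ^ (1 / p)

/-- The normalized test function `h_{p,z} = H_{p,z}/‖H_{p,z}‖_{p,α}`
(with kernel exponent `b`). -/
def hTest (n : ℕ) (p α b : ℝ) (z : En n) : En n → ℂ := fun w =>
  Hker b z w / ((lpNormOn n p α (Hker b z) : ℝ) : ℂ)

/-- The `ℓ^s` norm of a sequence of reals, valued in `ℝ≥0∞`. -/
def ellNormE (s : ℝ) (b : ℕ → ℝ) : ℝ≥0∞ := (∑' k, ENNReal.ofReal (b k) ^ s) ^ (1 / s)

/-- The `ℓ^s` norm of a sequence of extended reals. -/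
def ellNormE' (s : ℝ) (b : ℕ → ℝ≥0∞) : ℝ≥0∞ := (∑' k, b k ^ s) ^ (1 / s)

/-- The `L^s(𝔹ₙ,dλ)` norm of a nonnegative function, valued in `ℝ≥0∞`. -/
def lamNormE (n : ℕ) (s : ℝ) (g : En n → ℝ) : ℝ≥0∞ :=
  (∫⁻ z, ENNReal.ofReal (g z) ^ s ∂invMeas n) ^ (1 / s)

/-- The Bergman projection `P_β`. -/
def bergmanProj (n : ℕ) (β : ℝ) (f : En n → ℂ) (z : En n) : ℂ :=
  ∫ w, f w * (1 - herm z w) ^ (-((n : ℂ) + 1 + (β : ℂ))) ∂wMeas n β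

/-- The conjugate Bergman projection. -/
def conjBergmanProj (n : ℕ) (β : ℝ) (f : En n → ℂ) (z : En n) : ℂ :=
  ∫ w, f w * (1 - herm w z) ^ (-((n : ℂ) + 1 + (β : ℂ))) ∂wMeas n β

/-- `g` is bounded and holomorphic on `𝔹ₙ`. -/
def BoundedHolo (n : ℕ) (g : En n → ℂ) : Prop :=
  DifferentiableOn ℂ g (unitBall n) ∧ ∃ M, ∀ z ∈ unitBall n, ‖g z‖ ≤ M

/-- The big Hankel operator `H^β_f(g) = f g - P_β(f g)` at the level of functions. -/
def hankelFun (n : ℕ) (β : ℝ) (f g : En n → ℂ) : En n → ℂ := fun z =>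
  f z * g z - bergmanProj n β (fun w => f w * g w) z

/-- The little Hankel operator `h^β_f(g) = conj-P_β(f g)` at the level of functions. -/
def littleHankelFun (n : ℕ) (β : ℝ) (f g : En n → ℂ) : En n → ℂ :=
  conjBergmanProj n β fun w => f w * g w

/-- `T : A^p_α → L^q(dv_β)` extends the big Hankel operator `H^β_f` from the
bounded holomorphic functions. -/
def ExtendsBigHankel (n : ℕ) (p q α β : ℝ) [Fact (1 ≤ ENNReal.ofReal p)]
    [Fact (1 ≤ ENNReal.ofReal q)] (f : En n → ℂ)
    (T : BergmanSpace n p α → Lp ℂ (ENNReal.ofReal q) (wMeas n β)) : Prop :=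
  ∀ g : En n → ℂ, BoundedHolo n g →
    ∀ G : BergmanSpace n p α,
      ((G : Lp ℂ (ENNReal.ofReal p) (wMeas n α)) : En n → ℂ) =ᵐ[wMeas n α] g →
        (T G : En n → ℂ) =ᵐ[wMeas n β] hankelFun n β f g

/-- `T : A^p_α → L^q(dv_β)` extends the little Hankel operator `h^β_f` from the
bounded holomorphic functions. -/
def ExtendsLittleHankel (n : ℕ) (p q α β : ℝ) [Fact (1 ≤ ENNReal.ofReal p)]
    [Fact (1 ≤ ENNReal.ofReal q)] (f : En n → ℂ)
    (T : BergmanSpace n p α → Lp ℂ (ENNReal.ofReal q) (wMeas n β)) : Prop :=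
  ∀ g : En n → ℂ, BoundedHolo n g →
    ∀ G : BergmanSpace n p α,
      ((G : Lp ℂ (ENNReal.ofReal p) (wMeas n α)) : En n → ℂ) =ᵐ[wMeas n α] g →
        (T G : En n → ℂ) =ᵐ[wMeas n β] littleHankelFun n β f g

/-- `J : A^p_α → L^q(dμ)` represents the Carleson embedding `J_μ f = f`. -/
def RepresentsEmbedding (n : ℕ) (p q α : ℝ) [Fact (1 ≤ ENNReal.ofReal p)]
    [Fact (1 ≤ ENNReal.ofReal q)] (μ : Measure (En n))
    (J : BergmanSpace n p α → Lp ℂ (ENNReal.ofReal q) μ) : Prop :=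
  ∀ (G : BergmanSpace n p α) (g : En n → ℂ), DifferentiableOn ℂ g (unitBall n) →
    ((G : Lp ℂ (ENNReal.ofReal p) (wMeas n α)) : En n → ℂ) =ᵐ[wMeas n α] g →
      (J G : En n → ℂ) =ᵐ[μ] g

/-- The IDA function `G_{q,δ}(f)(z)`. -/
def Gq (n : ℕ) (q δ : ℝ) (f : En n → ℂ) (z : En n) : ℝ :=
  ⨅ h : {h : En n → ℂ // DifferentiableOn ℂ h (bergmanBall z δ)},
    ((vMeas n (bergmanBall z δ)).toReal⁻¹ *
        ∫ w in bergmanBall z δ, ‖f w - h.1 w‖ ^ q ∂vMeas n) ^ (1 / q)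

/-- The average of `f` over the Bergman ball `B(z,δ)`. -/
def ballAvg (n : ℕ) (δ : ℝ) (f : En n → ℂ) (z : En n) : ℂ :=
  ((vMeas n (bergmanBall z δ)).toReal⁻¹ : ℝ) • ∫ w in bergmanBall z δ, f w ∂vMeas n

/-- The local mean oscillation `MO_{q,δ}(f)(z)`. -/
def MOq (n : ℕ) (q δ : ℝ) (f : En n → ℂ) (z : En n) : ℝ :=
  ((vMeas n (bergmanBall z δ)).toReal⁻¹ *
      ∫ w in bergmanBall z δ, ‖f w - ballAvg n δ f z‖ ^ q ∂vMeas n) ^ (1 / q)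

/-- The integral operator `V_{b,β}`. -/
def Vop (n : ℕ) (b β : ℝ) (f : En n → ℂ) (z : En n) : ℂ :=
  ((volConst n (b + β) / volConst n β : ℝ) : ℂ) * (((1 - ‖z‖ ^ 2) ^ b : ℝ) : ℂ) *
    ∫ w, f w * (1 - herm z w) ^ (-((n : ℂ) + 1 + (β : ℂ) + (b : ℂ))) ∂wMeas n β

/-- The norm of the invariant gradient `|∇̃f(z)| = |∇(f ∘ φ_z)(0)|`. -/
def invGradNorm (n : ℕ) (f : En n → ℂ) (z : En n) : ℝ :=
  ‖fderiv ℂ (fun w => f (mobius z w)) 0‖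

/-- The Besov space norm `‖f‖_{B^γ_s}`, valued in `ℝ≥0∞`. -/
def besovNorm (n : ℕ) (s γ : ℝ) (f : En n → ℂ) : ℝ≥0∞ :=
  (∫⁻ z, ENNReal.ofReal ((1 - ‖z‖ ^ 2) ^ γ * invGradNorm n f z) ^ s ∂invMeas n) ^ (1 / s)


/-- The weak `ℓ^r` norm of a finite family of vectors. -/
def weakSumNorm (r : ℝ) {X : Type*} [NormedAddCommGroup X] [NormedSpace ℂ X] {m : ℕ}
    (x : Fin m → X) : ℝ :=
  ⨆ φ : {φ : X →L[ℂ] ℂ // ‖φ‖ ≤ 1}, (∑ i, ‖φ.1 (x i)‖ ^ r) ^ (1 / r)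

section WeakSumNorm

variable {X : Type*} [NormedAddCommGroup X] [NormedSpace ℂ X] {m : ℕ}

lemma weakSumNorm_nonneg (r : ℝ) (x : Fin m → X) : 0 ≤ weakSumNorm r x :=
  Real.iSup_nonneg fun _ => by positivity

lemma bddAbove_weakSumNorm {r : ℝ} (hr : 0 ≤ r) (x : Fin m → X) :
    BddAbove (Set.range fun φ : {φ : X →L[ℂ] ℂ // ‖φ‖ ≤ 1} =>
      (∑ i, ‖φ.1 (x i)‖ ^ r) ^ (1 / r)) := by
  refine ⟨(∑ i, ‖x i‖ ^ r) ^ (1 / r), ?_⟩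
  rintro _ ⟨φ, rfl⟩
  have hle (i : Fin m) : ‖φ.1 (x i)‖ ≤ ‖x i‖ :=
    φ.1.le_of_opNorm_le φ.2 (x i) |>.trans_eq (one_mul _)
  dsimp only
  gcongr with i
  exact hle i

/-- A contraction does not increase the weak norm of a family. -/
lemma weakSumNorm_map_le {Z : Type*} [NormedAddCommGroup Z] [NormedSpace ℂ Z] {r : ℝ}
    (hr : 0 ≤ r) (L : X →L[ℂ] Z) (hL : ‖L‖ ≤ 1) (x : Fin m → X) :
    weakSumNorm r (fun i => L (x i)) ≤ weakSumNorm r x := by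
  refine Real.iSup_le (fun φ => ?_) (weakSumNorm_nonneg r x)
  exact le_ciSup (bddAbove_weakSumNorm hr x)
    ⟨φ.1.comp L, (φ.1.opNorm_comp_le L).trans (mul_le_one₀ φ.2 (norm_nonneg _) hL)⟩

end WeakSumNorm

section SummingNorm

variable {X Y : Type*} [NormedAddCommGroup X] [NormedSpace ℂ X] [NormedAddCommGroup Y]

lemma summingNorm_nonneg (r s : ℝ) (T : X → Y) : 0 ≤ summingNorm r s T :=
  Real.sInf_nonneg fun _ hC => hC.1

/-- The infimum defining the summing norm is attained. -/
lemma IsSummingRS.summingBoundWith {r s : ℝ} {T : X → Y} (hT : IsSummingRS r s T) :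
    SummingBoundWith r s T (summingNorm r s T) := by
  have hclosed : IsClosed {C : ℝ | 0 ≤ C ∧ SummingBoundWith r s T C} := by
    simp only [SummingBoundWith, Set.ofPred_and, Set.ofPred_forall]
    refine (isClosed_le continuous_const continuous_id).inter ?_
    exact isClosed_iInter fun m => isClosed_iInter fun x =>
      isClosed_le continuous_const (continuous_id.mul continuous_const)
  exact (hclosed.csInf_mem hT ⟨0, fun _ hC => hC.1⟩).2

lemma IsSummingRS.sum_rpow_le {r : ℝ} (hr : 0 < r) {T : X → Y} (hT : IsSummingRS r r T)
    {m : ℕ} (x : Fin m → X) :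
    ∑ i, ‖T (x i)‖ ^ r ≤ summingNorm r r T ^ r * weakSumNorm r x ^ r := by
  rw [← Real.mul_rpow (summingNorm_nonneg r r T) (weakSumNorm_nonneg r x),
    ← Real.rpow_inv_le_iff_of_pos (by positivity)
      (mul_nonneg (summingNorm_nonneg r r T) (weakSumNorm_nonneg r x)) hr, ← one_div]
  exact hT.summingBoundWith m x

end SummingNorm

/-- The `ℓ^q` norm is dominated by the `ℓ^r` norm when `r ≤ q`. -/
lemma lp.norm_rpow_le_tsum_of_le {ι : Type*} {E : ι → Type*} [∀ i, NormedAddCommGroup (E i)]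
    {q r : ℝ} (hr : 0 < r) (hrq : r ≤ q) (f : lp E (ENNReal.ofReal q))
    (hf : Summable fun i => ‖f i‖ ^ r) : ‖f‖ ^ r ≤ ∑' i, ‖f i‖ ^ r := by
  have hq : (ENNReal.ofReal q).toReal = q := ENNReal.toReal_ofReal (hr.le.trans hrq)
  have hS : 0 ≤ ∑' i, ‖f i‖ ^ r := tsum_nonneg fun i => by positivity
  rw [← Real.le_rpow_inv_iff_of_pos (lp.norm_nonneg' f) hS hr]
  refine lp.norm_le_of_forall_sum_le (by rw [hq]; exact hr.trans_le hrq) (by positivity)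
    fun s => ?_
  rw [hq]
  have hterm (i : ι) : ‖f i‖ ^ q ≤ ‖f i‖ ^ r * ((∑' i, ‖f i‖ ^ r) ^ r⁻¹) ^ (q - r) := by
    have hle : ‖f i‖ ≤ (∑' i, ‖f i‖ ^ r) ^ r⁻¹ := by
      rw [Real.le_rpow_inv_iff_of_pos (norm_nonneg _) hS hr]
      exact hf.le_tsum i fun j _ => by positivity
    calc ‖f i‖ ^ q = ‖f i‖ ^ r * ‖f i‖ ^ (q - r) := by
          rw [← Real.rpow_add_of_nonneg (norm_nonneg _) hr.le (sub_nonneg.2 hrq)]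
          ring_nf
      _ ≤ _ := by
          gcongr
  calc ∑ i ∈ s, ‖f i‖ ^ q
      ≤ ∑ i ∈ s, ‖f i‖ ^ r * ((∑' i, ‖f i‖ ^ r) ^ r⁻¹) ^ (q - r) :=
        Finset.sum_le_sum fun i _ => hterm i
    _ ≤ (∑' i, ‖f i‖ ^ r) * ((∑' i, ‖f i‖ ^ r) ^ r⁻¹) ^ (q - r) := by
        rw [← Finset.sum_mul]
        gcongr
        exact hf.sum_le_tsum s fun i _ => by positivity
    _ = ((∑' i, ‖f i‖ ^ r) ^ r⁻¹) ^ r * ((∑' i, ‖f i‖ ^ r) ^ r⁻¹) ^ (q - r) := by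
        rw [Real.rpow_inv_rpow hS hr.ne']
    _ = ((∑' i, ‖f i‖ ^ r) ^ r⁻¹) ^ q := by
        rw [← Real.rpow_add_of_nonneg (by positivity) hr.le (sub_nonneg.2 hrq)]
        ring_nf

/-- A coordinate of a family in an `ℓ^p`-direct sum has weak norm at most that of the family. -/
lemma lp.weakSumNorm_apply_le {ι : Type*} {E : ι → Type*} [∀ i, NormedAddCommGroup (E i)]
    [∀ i, NormedSpace ℂ (E i)] {p : ℝ≥0∞} [Fact (1 ≤ p)] {r : ℝ} (hr : 0 ≤ r) {m : ℕ}
    (x : Fin m → lp E p) (k : ι) :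
    weakSumNorm r (fun i => x i k) ≤ weakSumNorm r x := by
  refine weakSumNorm_map_le hr (lp.evalCLM ℂ E p k) ?_ x
  refine ContinuousLinearMap.opNorm_le_bound _ zero_le_one fun f => ?_
  rw [one_mul]
  exact lp.norm_apply_le_norm (zero_lt_one.trans_le Fact.out).ne' f k

theorem statement4 (p q r : ℝ) (hp : 1 ≤ p) (hr : 1 ≤ r) (hrq : r ≤ q)
    (X Y : ℕ → Type*) [∀ k, NormedAddCommGroup (X k)] [∀ k, NormedSpace ℂ (X k)]
    [∀ k, NormedAddCommGroup (Y k)] [∀ k, NormedSpace ℂ (Y k)]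
    [Fact (1 ≤ ENNReal.ofReal p)] [Fact (1 ≤ ENNReal.ofReal q)]
    (Tk : ∀ k, X k →ₗ[ℂ] Y k) (hTk : ∀ k, IsSummingRS r r ⇑(Tk k))
    (hsum : Summable fun k => summingNorm r r ⇑(Tk k) ^ r) :
    ∃ T : lp X (ENNReal.ofReal p) →ₗ[ℂ] lp Y (ENNReal.ofReal q),
      (∀ x k, (T x) k = Tk k (x k)) ∧
        SummingBoundWith r r ⇑T ((∑' k, summingNorm r r ⇑(Tk k) ^ r) ^ (1 / r)) := by
  have hr0 : 0 < r := zero_lt_one.trans_le hr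
  have hcoord {m : ℕ} (x : Fin m → lp X (ENNReal.ofReal p)) (k : ℕ) :
      ∑ i, ‖Tk k (x i k)‖ ^ r ≤ summingNorm r r ⇑(Tk k) ^ r * weakSumNorm r x ^ r := by
    refine ((hTk k).sum_rpow_le hr0 fun i => x i k).trans ?_
    have := summingNorm_nonneg r r ⇑(Tk k)
    have := weakSumNorm_nonneg r fun i => x i k
    gcongr
    exact lp.weakSumNorm_apply_le hr0.le x k
  have hsummable (x : lp X (ENNReal.ofReal p)) : Summable fun k => ‖Tk k (x k)‖ ^ r := by
    refine Summable.of_nonneg_of_le (fun k => by positivity) (fun k => ?_)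
      (hsum.mul_right (weakSumNorm r (fun _ : Fin 1 => x) ^ r))
    simpa using hcoord (fun _ : Fin 1 => x) k
  have hmem (x : lp X (ENNReal.ofReal p)) :
      Memℓp (fun k => Tk k (x k)) (ENNReal.ofReal q) := by
    refine Memℓp.of_exponent_ge (memℓp_gen ?_) (ENNReal.ofReal_le_ofReal hrq)
    rw [ENNReal.toReal_ofReal hr0.le]
    exact hsummable x
  let T : lp X (ENNReal.ofReal p) →ₗ[ℂ] lp Y (ENNReal.ofReal q) :=
    { toFun := fun x => ⟨fun k => Tk k (x k), hmem x⟩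
      map_add' := fun x y => by
        ext k
        exact map_add (Tk k) (x k) (y k)
      map_smul' := fun c x => by
        ext k
        exact map_smul (Tk k) c (x k) }
  refine ⟨T, fun x k => rfl, fun m x => ?_⟩
  have hS : 0 ≤ ∑' k, summingNorm r r ⇑(Tk k) ^ r :=
    tsum_nonneg fun k => Real.rpow_nonneg (summingNorm_nonneg r r _) r
  have hw := weakSumNorm_nonneg r x
  have hbound : ∑ i, ‖T (x i)‖ ^ r ≤
      (∑' k, summingNorm r r ⇑(Tk k) ^ r) * weakSumNorm r x ^ r :=
    calc ∑ i, ‖T (x i)‖ ^ r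
        ≤ ∑ i, ∑' k, ‖Tk k (x i k)‖ ^ r :=
          Finset.sum_le_sum fun i _ =>
            lp.norm_rpow_le_tsum_of_le hr0 hrq (T (x i)) (hsummable (x i))
      _ = ∑' k, ∑ i, ‖Tk k (x i k)‖ ^ r :=
          (Summable.tsum_finsetSum fun i _ => hsummable (x i)).symm
      _ ≤ ∑' k, summingNorm r r ⇑(Tk k) ^ r * weakSumNorm r x ^ r :=
          (summable_sum fun i _ => hsummable (x i)).tsum_le_tsum (hcoord x)
            (hsum.mul_right _)
      _ = (∑' k, summingNorm r r ⇑(Tk k) ^ r) * weakSumNorm r x ^ r := tsum_mul_right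
  calc (∑ i, ‖T (x i)‖ ^ r) ^ (1 / r)
      ≤ ((∑' k, summingNorm r r ⇑(Tk k) ^ r) * weakSumNorm r x ^ r) ^ (1 / r) := by
        gcongr
    _ = (∑' k, summingNorm r r ⇑(Tk k) ^ r) ^ (1 / r) * weakSumNorm r x := by
        rw [Real.mul_rpow hS (by positivity), one_div, Real.rpow_rpow_inv hw hr0.ne']
end
end

section
/- Let n ≥ 1, α > −1, p, q ≥ 1, δ > 0, let {a_k} be a δ-lattice in 𝔹ₙ, and let μ be a positive Borel measure on 𝔹ₙ. Fix an index k and assume (1−|a_k|²)^{−(n+1+α)q/p} μ(B(a_k,δ)) < ∞. Define S_k(f) = f restricted to B(a_k,δ). Then S_k is a 1-summing operator from A^p(B(a_k,3δ), dv_α) (holomorphic functions on B(a_k,3δ) that are p-integrable with respect to v_α) to L^q(B(a_k,δ), dμ), and π_1(S_k) ≤ C (1−|a_k|²)^{−(n+1+α)/p} μ(B(a_k,δ))^{1/q} for a constant C depending only on n, p, q, α, δ. -/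
open MeasureTheory Metric Filter Complex
open scoped ENNReal NNReal BigOperators ComplexConjugate

noncomputable section

/-- `S` represents the restriction operator `f ↦ f|_{B(a_k,δ)}` from
`A^p(B(a_k,3δ),dv_α)` to `L^q(B(a_k,δ),dμ)`. -/
def RepRestriction (n : ℕ) (p q α δ : ℝ) [Fact (1 ≤ ENNReal.ofReal p)]
    [Fact (1 ≤ ENNReal.ofReal q)] (μ : Measure (En n)) (ak : En n)
    (S : ↥(holoSubmodule n (ENNReal.ofReal p) (bergmanBall ak (3 * δ))
          ((wMeas n α).restrict (bergmanBall ak (3 * δ)))) →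
        Lp ℂ (ENNReal.ofReal q) (μ.restrict (bergmanBall ak δ))) : Prop :=
  ∀ F : ↥(holoSubmodule n (ENNReal.ofReal p) (bergmanBall ak (3 * δ))
      ((wMeas n α).restrict (bergmanBall ak (3 * δ)))),
    ∀ g : En n → ℂ, DifferentiableOn ℂ g (bergmanBall ak (3 * δ)) →
      ((F : Lp ℂ (ENNReal.ofReal p) ((wMeas n α).restrict (bergmanBall ak (3 * δ)))) :
          En n → ℂ) =ᵐ[(wMeas n α).restrict (bergmanBall ak (3 * δ))] g →
      ((S F : Lp ℂ (ENNReal.ofReal q) (μ.restrict (bergmanBall ak δ))) : En n → ℂ)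
        =ᵐ[μ.restrict (bergmanBall ak δ)] g

/-- A holomorphic function of one variable is dominated at the centre of the unit disc by
its mean over the unit circle. -/
lemma enorm_mul_le_lintegral_circle {f : ℂ → ℂ} (hf : DiffContOnCl ℂ f (ball 0 1)) :
    ‖f 0‖ₑ * ENNReal.ofReal (2 * Real.pi) ≤
      ∫⁻ θ in Set.Ioc 0 (2 * Real.pi), ‖f (circleMap 0 1 θ)‖ₑ := by
  have hpi : (0 : ℝ) < 2 * Real.pi := by positivity
  have h := DiffContOnCl.circleAverage (f := f) (c := 0) (R := 1) (by simpa using hf)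
  rw [Real.circleAverage_def, intervalIntegral.integral_of_le hpi.le] at h
  have hint : ∫ θ in Set.Ioc 0 (2 * Real.pi), f (circleMap 0 1 θ)
      = ((2 * Real.pi : ℝ) : ℂ) * f 0 := by
    rw [← h, Complex.real_smul, ← mul_assoc, ← Complex.ofReal_mul, mul_inv_cancel₀ hpi.ne']
    simp
  calc ‖f 0‖ₑ * ENNReal.ofReal (2 * Real.pi)
      = ‖∫ θ in Set.Ioc 0 (2 * Real.pi), f (circleMap 0 1 θ)‖ₑ := by
        rw [hint, enorm_mul, mul_comm]
        congr 1
        rw [← ofReal_norm, Complex.norm_real, Real.norm_of_nonneg hpi.le]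
    _ ≤ _ := enorm_integral_le_lintegral_enorm _

/-- Multiplication by a unimodular number preserves Lebesgue measure on `ℂⁿ`. -/
lemma measurePreserving_circle_smul {n : ℕ} {c : ℂ} (hc : ‖c‖ = 1) :
    MeasurePreserving (fun u : En n => c • u) volume volume := by
  have hc0 : c ≠ 0 := by
    rintro rfl
    simp at hc
  let e : En n ≃ₗ[ℂ] En n := LinearEquiv.smulOfUnit (Units.mk0 c hc0)
  let e' : En n ≃ₗᵢ[ℝ] En n :=
    ⟨e.restrictScalars ℝ, fun x => by
      change ‖c • x‖ = ‖x‖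
      rw [norm_smul, hc, one_mul]⟩
  exact e'.measurePreserving

/-- The sub-mean value property of holomorphic functions over Euclidean balls. -/
lemma enorm_mul_volume_ball_le {n : ℕ} {f : En n → ℂ} {c : En n} {ε : ℝ}
    (hf : DifferentiableOn ℂ f (ball c ε)) :
    ‖f c‖ₑ * volume (ball c ε) ≤ ∫⁻ u in ball c ε, ‖f u‖ₑ := by
  have hpi : (0 : ℝ) < 2 * Real.pi := by positivity
  set B : Set (En n) := ball 0 ε with hB
  let G : En n → ℝ≥0∞ := B.indicator fun u => ‖f (c + u)‖ₑ
  have hmaps : Set.MapsTo (fun u : En n => c + u) B (ball c ε) := fun u hu => by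
    simpa [hB] using hu
  have hfc : ContinuousOn (fun u => f (c + u)) B :=
    hf.continuousOn.comp (by fun_prop) hmaps
  have hG : Measurable G := by
    classical
    have h : Measurable (B.piecewise (fun u => ‖f (c + u)‖ₑ) 0) :=
      hfc.enorm.measurable_piecewise continuousOn_const isOpen_ball.measurableSet
    rwa [Set.piecewise_eq_indicator] at h
  have hrot : ∀ θ : ℝ, ∫⁻ u, G (circleMap 0 1 θ • u) = ∫⁻ u, G u := fun θ =>
    (measurePreserving_circle_smul (by simp)).lintegral_comp hG
  have hshift : ∫⁻ u in ball c ε, ‖f u‖ₑ = ∫⁻ u, G u := by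
    rw [← lintegral_indicator isOpen_ball.measurableSet,
      ← lintegral_add_left_eq_self _ c]
    congr 1 with u
    simp [G, hB, Set.indicator]
  have hpoint : ∀ u ∈ B, ‖f c‖ₑ * ENNReal.ofReal (2 * Real.pi) ≤
      ∫⁻ θ in Set.Ioc 0 (2 * Real.pi), G (circleMap 0 1 θ • u) := by
    intro u hu
    have hmem : ∀ z : ℂ, ‖z‖ ≤ 1 → z • u ∈ B := fun z hz => by
      simp only [hB, mem_ball_zero_iff, norm_smul] at hu ⊢
      nlinarith [norm_nonneg u]
    have hd : DifferentiableOn ℂ (fun z : ℂ => f (c + z • u)) (closedBall 0 1) := by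
      refine hf.comp (f := fun z : ℂ => c + z • u) (by fun_prop) ?_
      intro z hz
      exact hmaps (hmem z (by simpa using hz))
    have hcl : DiffContOnCl ℂ (fun z : ℂ => f (c + z • u)) (ball 0 1) :=
      DifferentiableOn.diffContOnCl (by rwa [closure_ball _ one_ne_zero])
    refine le_trans (by simpa using enorm_mul_le_lintegral_circle hcl) (le_of_eq ?_)
    congr 1 with θ
    simp only [G]
    rw [Set.indicator_of_mem (hmem _ (by simp))]
  have hmeas2 : Measurable fun x : En n × ℝ => G (circleMap 0 1 x.2 • x.1) := by
    refine hG.comp (Continuous.measurable ?_)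
    have : Continuous fun x : En n × ℝ => circleMap 0 1 x.2 :=
      (continuous_circleMap 0 1).comp continuous_snd
    exact this.smul continuous_fst
  have hvol : volume (ball c ε) = volume B := Measure.addHaar_ball_center _ _ _
  have key : ENNReal.ofReal (2 * Real.pi) * (‖f c‖ₑ * volume (ball c ε)) ≤
      ENNReal.ofReal (2 * Real.pi) * ∫⁻ u in ball c ε, ‖f u‖ₑ := by
    calc ENNReal.ofReal (2 * Real.pi) * (‖f c‖ₑ * volume (ball c ε))
        = ∫⁻ u in B, ‖f c‖ₑ * ENNReal.ofReal (2 * Real.pi) := by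
          rw [setLIntegral_const, hvol]
          ring
      _ ≤ ∫⁻ u in B, ∫⁻ θ in Set.Ioc 0 (2 * Real.pi), G (circleMap 0 1 θ • u) :=
          setLIntegral_mono' isOpen_ball.measurableSet hpoint
      _ ≤ ∫⁻ u, ∫⁻ θ in Set.Ioc 0 (2 * Real.pi), G (circleMap 0 1 θ • u) :=
          setLIntegral_le_lintegral _ _
      _ = ∫⁻ θ in Set.Ioc 0 (2 * Real.pi), ∫⁻ u, G (circleMap 0 1 θ • u) :=
          lintegral_lintegral_swap hmeas2.aemeasurable
      _ = _ := by
          simp_rw [hrot]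
          rw [setLIntegral_const, hshift, Real.volume_Ioc, sub_zero, mul_comm]
  exact (ENNReal.mul_le_mul_iff_right (by simpa using hpi) ENNReal.ofReal_ne_top).1 key

/-- The quantity `√(1-|a|²)`. -/
def defect {n : ℕ} (a : En n) : ℝ := Real.sqrt (1 - ‖a‖ ^ 2)

/-- The linear map `u ↦ s² P_a u + s Q_a u`, where `s = √(1-|a|²)`, `P_a` is the orthogonal
projection onto `ℂ a` and `Q_a = 1 - P_a`, written without dividing by `|a|²`. -/
def chartLin {n : ℕ} (a : En n) : En n →ₗ[ℂ] En n :=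
  (defect a : ℂ) •
    LinearMap.transvection ((-(1 + (defect a : ℂ))⁻¹) • (innerSL ℂ a).toLinearMap) a

/-- An affine chart of `𝔹ₙ` centred at `a` and adapted to the Bergman metric. -/
def chart {n : ℕ} (a u : En n) : En n := a + chartLin a u

/-- The preimage under `chart a` of the Bergman ball around `a` of pseudohyperbolic
radius `R`. -/
def chartBall {n : ℕ} (a : En n) (R : ℝ) : Set (En n) :=
  {u | ‖u‖ < R * ‖1 - herm u a‖}

section Chart

variable {n : ℕ} {a u : En n} {R R' : ℝ}

lemma herm_eq_inner (z w : En n) : herm z w = inner ℂ w z := by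
  simp [herm, PiLp.inner_apply]

lemma herm_self (a : En n) : herm a a = ((‖a‖ ^ 2 : ℝ) : ℂ) := by
  rw [herm_eq_inner, inner_self_eq_norm_sq_to_K]
  simp

lemma norm_herm_le (ha : ‖a‖ < 1) (u : En n) : ‖herm u a‖ ≤ ‖u‖ := by
  rw [herm_eq_inner]
  have := norm_inner_le_norm (𝕜 := ℂ) a u
  nlinarith [norm_nonneg u]

lemma defect_pos (ha : ‖a‖ < 1) : 0 < defect a := by
  apply Real.sqrt_pos.2
  nlinarith [norm_nonneg a]

lemma defect_sq (ha : ‖a‖ < 1) : defect a ^ 2 = 1 - ‖a‖ ^ 2 :=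
  Real.sq_sqrt (by nlinarith [norm_nonneg a])

lemma chart_eq (a u : En n) :
    chart a u = a + (defect a : ℂ) • (u - ((1 + (defect a : ℂ))⁻¹ * herm u a) • a) := by
  simp [chart, chartLin, LinearMap.transvection.apply, herm_eq_inner, sub_eq_add_neg]

lemma one_add_defect_ne (ha : ‖a‖ < 1) : (1 + (defect a : ℂ)) ≠ 0 := by
  have := defect_pos ha
  exact_mod_cast (by positivity : (1 + defect a) ≠ 0)

lemma herm_add_left (x y z : En n) : herm (x + y) z = herm x z + herm y z := by
  simp [herm_eq_inner]

lemma herm_sub_left (x y z : En n) : herm (x - y) z = herm x z - herm y z := by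
  simp [herm_eq_inner]

lemma herm_smul_left (c : ℂ) (x z : En n) : herm (c • x) z = c * herm x z := by
  simp [herm_eq_inner]

lemma one_sub_herm_chart (ha : ‖a‖ < 1) (u : En n) :
    1 - herm (chart a u) a = (defect a : ℂ) ^ 2 * (1 - herm u a) := by
  have hs : ((‖a‖ ^ 2 : ℝ) : ℂ) = 1 - (defect a : ℂ) ^ 2 := by
    rw [← Complex.ofReal_pow, defect_sq ha]; push_cast; ring
  have h1 := one_add_defect_ne ha
  rw [chart_eq, herm_add_left, herm_smul_left, herm_sub_left, herm_smul_left, herm_self, hs]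
  field_simp
  ring

lemma one_sub_norm_chart_sq (ha : ‖a‖ < 1) (u : En n) :
    1 - ‖chart a u‖ ^ 2 = (1 - ‖a‖ ^ 2) * (‖1 - herm u a‖ ^ 2 - ‖u‖ ^ 2) := by
  have hs := defect_sq ha
  have h0 := defect_pos ha
  set s := defect a with hsdef
  have hc : (1 + (s : ℂ))⁻¹ = (((1 + s)⁻¹ : ℝ) : ℂ) := by push_cast; rfl
  have e1 : ‖chart a u‖ ^ 2 = ‖a‖ ^ 2 + 2 * (s * ((herm u a).re
      - (1 + s)⁻¹ * (herm u a).re * ‖a‖ ^ 2))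
      + s ^ 2 * (‖u‖ ^ 2 - 2 * ((1 + s)⁻¹ * ‖herm u a‖ ^ 2)
        + ((1 + s)⁻¹ * ‖herm u a‖) ^ 2 * ‖a‖ ^ 2) := by
    rw [chart_eq, ← hsdef, hc, norm_add_sq (𝕜 := ℂ), norm_smul, mul_pow, norm_sub_sq (𝕜 := ℂ),
      norm_smul, inner_smul_right, inner_sub_right, inner_smul_right, inner_smul_right,
      ← herm_eq_inner, ← herm_eq_inner, herm_self]
    have hau : inner ℂ u a = conj (herm u a) := by
      rw [herm_eq_inner, inner_conj_symm]
    rw [hau, mul_assoc _ _ (conj (herm u a)), Complex.mul_conj, Complex.normSq_eq_norm_sq]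
    have h2 : ‖(((1 + s)⁻¹ : ℝ) : ℂ) * herm u a‖ = (1 + s)⁻¹ * ‖herm u a‖ := by
      rw [norm_mul, Complex.norm_real, Real.norm_of_nonneg (by positivity)]
    rw [h2, Complex.norm_real, Real.norm_of_nonneg h0.le, mul_pow ((1 + s)⁻¹ * ‖herm u a‖)]
    have h3 : RCLike.re ((s : ℂ) * (herm u a - (((1 + s)⁻¹ : ℝ) : ℂ) * herm u a
        * ((‖a‖ ^ 2 : ℝ) : ℂ))) = s * ((herm u a).re
      - (1 + s)⁻¹ * (herm u a).re * ‖a‖ ^ 2) := by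
      simp only [RCLike.re_eq_complex_re, Complex.re_ofReal_mul, Complex.sub_re,
        Complex.re_mul_ofReal]
    have h4 : RCLike.re ((((1 + s)⁻¹ : ℝ) : ℂ) * ((‖herm u a‖ ^ 2 : ℝ) : ℂ)) =
        (1 + s)⁻¹ * ‖herm u a‖ ^ 2 := by
      rw [← Complex.ofReal_mul, RCLike.re_eq_complex_re, Complex.ofReal_re]
    rw [h3, h4]
  have e2 : ‖1 - herm u a‖ ^ 2 = 1 - 2 * (herm u a).re + ‖herm u a‖ ^ 2 := by
    rw [← Complex.normSq_eq_norm_sq, ← Complex.normSq_eq_norm_sq, Complex.normSq_apply,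
      Complex.normSq_apply]
    simp
    ring
  have e3 : ‖a‖ ^ 2 = 1 - s ^ 2 := by linarith
  have h1 : (1 + s) ≠ 0 := by positivity
  rw [e1, e2, e3]
  field_simp
  ring

lemma norm_mobius_chart (ha : ‖a‖ < 1) (u : En n) :
    ‖mobius a (chart a u)‖ = ‖u‖ / ‖1 - herm u a‖ := by
  have h0 := defect_pos ha
  have hs0 : (defect a : ℂ) ≠ 0 := by exact_mod_cast h0.ne'
  have h1 := one_add_defect_ne ha
  have key : mobius a (chart a u) = (1 - herm u a)⁻¹ • (-u) := by
    by_cases hz : a = 0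
    · subst hz
      have : herm u 0 = 0 := by simp [herm_eq_inner]
      rw [mobius, if_pos rfl, chart_eq]
      simp [this, defect]
    · have hs : ((‖a‖ ^ 2 : ℝ) : ℂ) = 1 - (defect a : ℂ) ^ 2 := by
        rw [← Complex.ofReal_pow, defect_sq ha]; push_cast; ring
      have hne : (1 - (defect a : ℂ) ^ 2) ≠ 0 := by
        rw [← hs]
        exact_mod_cast (pow_pos (norm_pos_iff.2 hz) 2).ne'
      have hw : herm (chart a u) a = 1 - (defect a : ℂ) ^ 2 * (1 - herm u a) := by
        rw [← one_sub_herm_chart ha]; ring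
      rw [mobius, if_neg hz, one_sub_herm_chart ha, herm_self, hs, hw]
      rw [mul_inv, mul_comm, mul_smul]
      congr 1
      rw [inv_smul_eq_iff₀ (pow_ne_zero 2 hs0), chart_eq]
      change _ - _ - (defect a : ℂ) • _ = _
      match_scalars
      · field_simp
        ring
      · field_simp
  rw [key, norm_smul, norm_neg, norm_inv]
  field_simp

lemma chartBall_bounds (ha : ‖a‖ < 1) (hR0 : 0 < R) (hR : R < 1) (hu : u ∈ chartBall a R) :
    1 / 2 ≤ ‖1 - herm u a‖ ∧ ‖1 - herm u a‖ ≤ 1 / (1 - R) ∧ ‖u‖ ≤ R / (1 - R) := by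
  have hu : ‖u‖ < R * ‖1 - herm u a‖ := hu
  have h1 := norm_herm_le ha u
  have h2 : ‖(1 : ℂ)‖ - ‖herm u a‖ ≤ ‖1 - herm u a‖ := norm_sub_norm_le _ _
  have h3 : ‖1 - herm u a‖ ≤ ‖(1 : ℂ)‖ + ‖herm u a‖ := norm_sub_le _ _
  rw [norm_one] at h2 h3
  have hR1 : 0 < 1 - R := by linarith
  have h4 := norm_nonneg u
  have h5 := norm_nonneg (1 - herm u a)
  refine ⟨by nlinarith, ?_, ?_⟩
  · rw [le_div_iff₀ hR1]; nlinarith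
  · rw [le_div_iff₀ hR1]; nlinarith

lemma ball_subset_chartBall (ha : ‖a‖ < 1) (hR0 : 0 < R) (hRR' : R < R') (hR' : R' < 1)
    (hu : u ∈ chartBall a R) : ball u ((R' - R) / 8) ⊆ chartBall a R' := by
  intro v hv
  obtain ⟨h1, -, -⟩ := chartBall_bounds ha hR0 (hRR'.trans hR') hu
  have hu : ‖u‖ < R * ‖1 - herm u a‖ := hu
  rw [mem_ball_iff_norm] at hv
  have h2 := norm_herm_le ha (v - u)
  rw [herm_sub_left] at h2
  have h3 : ‖1 - herm u a‖ - ‖1 - herm v a‖ ≤ ‖(1 - herm u a) - (1 - herm v a)‖ :=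
    norm_sub_norm_le _ _
  rw [show (1 - herm u a) - (1 - herm v a) = herm v a - herm u a by ring] at h3
  have h4 : ‖v‖ - ‖u‖ ≤ ‖v - u‖ := norm_sub_norm_le _ _
  change ‖v‖ < R' * ‖1 - herm v a‖
  nlinarith

lemma tanh_mem_Ioo (r : ℝ) : Real.tanh r ∈ Set.Ioo (-1) 1 :=
  ⟨Real.neg_one_lt_tanh r, Real.tanh_lt_one r⟩

lemma tanh_lt_tanh {r r' : ℝ} (h : r < r') : Real.tanh r < Real.tanh r' := by
  rwa [← Real.artanh_lt_artanh_iff (tanh_mem_Ioo r) (tanh_mem_Ioo r'), Real.artanh_tanh,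
    Real.artanh_tanh]

lemma tanh_pos {r : ℝ} (h : 0 < r) : 0 < Real.tanh r := by
  simpa using tanh_lt_tanh h

lemma half_log_lt_iff {m r : ℝ} (hm0 : 0 ≤ m) (hm : m < 1) :
    1 / 2 * Real.log ((1 + m) / (1 - m)) < r ↔ m < Real.tanh r := by
  rw [← Real.artanh_eq_half_log ⟨by linarith, hm.le⟩,
    ← Real.artanh_lt_artanh_iff ⟨by linarith, hm⟩ (tanh_mem_Ioo r), Real.artanh_tanh]

lemma chart_mem_bergmanBall_iff (ha : ‖a‖ < 1) {r : ℝ} :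
    chart a u ∈ bergmanBall a r ↔ u ∈ chartBall a (Real.tanh r) := by
  have hid := one_sub_norm_chart_sq ha u
  have hs : 0 < 1 - ‖a‖ ^ 2 := by nlinarith [norm_nonneg a]
  have hball : chart a u ∈ unitBall n ↔ ‖u‖ < ‖1 - herm u a‖ := by
    rw [unitBall, mem_ball_zero_iff, ← sq_lt_one_iff₀ (norm_nonneg _),
      ← sq_lt_sq₀ (norm_nonneg _) (norm_nonneg _), ← sub_pos, hid, mul_pos_iff_of_pos_left hs,
      sub_pos]
  have hdist : ‖u‖ < ‖1 - herm u a‖ →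
      (bergmanDist a (chart a u) < r ↔ ‖u‖ < Real.tanh r * ‖1 - herm u a‖) := by
    intro h
    have hD : 0 < ‖1 - herm u a‖ := (norm_nonneg u).trans_lt h
    rw [bergmanDist, norm_mobius_chart ha, half_log_lt_iff (by positivity)
      ((div_lt_one hD).2 h), div_lt_iff₀ hD]
  constructor
  · rintro ⟨h1, h2⟩
    exact (hdist (hball.1 h1)).1 h2
  · intro h
    have h' : ‖u‖ < Real.tanh r * ‖1 - herm u a‖ := h
    have h1 : ‖u‖ < ‖1 - herm u a‖ := by
      nlinarith [Real.tanh_lt_one r, norm_nonneg (1 - herm u a)]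
    exact ⟨hball.2 h1, (hdist h1).2 h'⟩

lemma isOpen_chartBall (a : En n) (R : ℝ) : IsOpen (chartBall a R) := by
  have : Continuous fun u : En n => herm u a := by
    simp_rw [herm_eq_inner]
    fun_prop
  exact isOpen_lt (by fun_prop) (by fun_prop)

lemma det_chartLin (ha : ‖a‖ < 1) :
    LinearMap.det ((chartLin a).restrictScalars ℝ) = (1 - ‖a‖ ^ 2) ^ (n + 1) := by
  have h1 := one_add_defect_ne ha
  have hs : ((‖a‖ ^ 2 : ℝ) : ℂ) = 1 - (defect a : ℂ) ^ 2 := by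
    rw [← Complex.ofReal_pow, defect_sq ha]; push_cast; ring
  have hdet : LinearMap.det (chartLin a) = ((defect a ^ (n + 1) : ℝ) : ℂ) := by
    rw [chartLin, LinearMap.det_smul, LinearMap.transvection.det]
    have : (innerSL ℂ a) a = 1 - (defect a : ℂ) ^ 2 := by
      rw [← hs, ← herm_self, herm_eq_inner]
      rfl
    simp only [LinearMap.smul_apply, ContinuousLinearMap.coe_coe, this, smul_eq_mul,
      finrank_euclideanSpace, Fintype.card_fin]
    push_cast
    field_simp
    ring
  rw [LinearMap.det_restrictScalars, hdet, Algebra.norm_complex_apply, Complex.normSq_ofReal,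
    ← defect_sq ha]
  ring

lemma det_chartLin_ne_zero (ha : ‖a‖ < 1) :
    LinearMap.det ((chartLin a).restrictScalars ℝ) ≠ 0 := by
  rw [det_chartLin ha]
  have : 0 < 1 - ‖a‖ ^ 2 := by nlinarith [norm_nonneg a]
  positivity

/-- `chart a` as a homeomorphism of `ℂⁿ`. -/
def chartHomeo (ha : ‖a‖ < 1) : En n ≃ₜ En n :=
  (LinearMap.equivOfDetNeZero _
    (det_chartLin_ne_zero ha)).toContinuousLinearEquiv.toHomeomorph.trans (Homeomorph.addLeft a)

lemma coe_chartHomeo (ha : ‖a‖ < 1) : ⇑(chartHomeo ha) = chart a := rfl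

lemma chart_preimage_bergmanBall (ha : ‖a‖ < 1) (r : ℝ) :
    chart a ⁻¹' bergmanBall a r = chartBall a (Real.tanh r) :=
  Set.ext fun _ => chart_mem_bergmanBall_iff ha

lemma isOpen_bergmanBall (ha : ‖a‖ < 1) (r : ℝ) : IsOpen (bergmanBall a r) := by
  rw [← (chartHomeo ha).isOpen_preimage, coe_chartHomeo, chart_preimage_bergmanBall ha]
  exact isOpen_chartBall _ _

lemma map_chart_volume (ha : ‖a‖ < 1) :
    Measure.map (chart a) volume
      = ENNReal.ofReal (((1 - ‖a‖ ^ 2) ^ (n + 1))⁻¹) • (volume : Measure (En n)) := by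
  have hpos : 0 < 1 - ‖a‖ ^ 2 := by nlinarith [norm_nonneg a]
  have h := Measure.map_linearMap_addHaar_eq_smul_addHaar (volume : Measure (En n))
    (det_chartLin_ne_zero ha)
  have hcomp : chart a = (fun x => a + x) ∘ ((chartLin a).restrictScalars ℝ) := rfl
  rw [hcomp, ← Measure.map_map (by fun_prop)
    (LinearMap.continuous_of_finiteDimensional _).measurable, h, Measure.map_smul,
    map_add_left_eq_self, det_chartLin ha, abs_of_nonneg (by positivity)]

lemma differentiable_chart (a : En n) : Differentiable ℂ (chart a) := by
  have : Differentiable ℂ (chartLin a) :=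
    (LinearMap.toContinuousLinearMap (chartLin a)).differentiable
  exact this.const_add a

end Chart

section Evaluation

variable {n : ℕ} {a : En n}

lemma one_sub_norm_sq_pos (ha : ‖a‖ < 1) : 0 < 1 - ‖a‖ ^ 2 := by
  nlinarith [norm_nonneg a]

/-- On a Bergman ball around `a` the weight `(1-|z|²)^α` is bounded below by a multiple of
`(1-|a|²)^α`. -/
lemma exists_mul_rpow_le_rpow_chart (n : ℕ) (α : ℝ) {R : ℝ} (hR0 : 0 < R) (hR : R < 1) :
    ∃ κ > (0 : ℝ), ∀ a : En n, ‖a‖ < 1 → ∀ u ∈ chartBall a R,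
      κ * (1 - ‖a‖ ^ 2) ^ α ≤ (1 - ‖chart a u‖ ^ 2) ^ α := by
  have hlo : 0 < (1 - R ^ 2) / 4 := by nlinarith
  have hhi : 0 < (1 / (1 - R)) ^ 2 := by
    have : 0 < 1 - R := by linarith
    positivity
  have main : ∀ a : En n, ‖a‖ < 1 → ∀ u ∈ chartBall a R, ∃ y,
      (1 - ‖chart a u‖ ^ 2) ^ α = y ^ α * (1 - ‖a‖ ^ 2) ^ α ∧
        (1 - R ^ 2) / 4 ≤ y ∧ y ≤ (1 / (1 - R)) ^ 2 := by
    intro a ha u hu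
    obtain ⟨h1, h2, -⟩ := chartBall_bounds ha hR0 hR hu
    have hu : ‖u‖ < R * ‖1 - herm u a‖ := hu
    have h3 : ‖u‖ ^ 2 ≤ (R * ‖1 - herm u a‖) ^ 2 := by gcongr
    have h4 : ‖1 - herm u a‖ ^ 2 ≤ (1 / (1 - R)) ^ 2 := by gcongr
    have h5 : (1 / 2 : ℝ) ^ 2 ≤ ‖1 - herm u a‖ ^ 2 := by gcongr
    have hl : (1 - R ^ 2) / 4 ≤ ‖1 - herm u a‖ ^ 2 - ‖u‖ ^ 2 := by nlinarith
    refine ⟨‖1 - herm u a‖ ^ 2 - ‖u‖ ^ 2, ?_, hl, by nlinarith [sq_nonneg ‖u‖]⟩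
    rw [one_sub_norm_chart_sq ha, Real.mul_rpow (one_sub_norm_sq_pos ha).le (hlo.le.trans hl),
      mul_comm]
  rcases le_total 0 α with hα | hα
  · refine ⟨((1 - R ^ 2) / 4) ^ α, by positivity, fun a ha u hu => ?_⟩
    obtain ⟨y, hy, h1, -⟩ := main a ha u hu
    have := one_sub_norm_sq_pos ha
    rw [hy]
    gcongr
  · refine ⟨((1 / (1 - R)) ^ 2) ^ α, by positivity, fun a ha u hu => ?_⟩
    obtain ⟨y, hy, h1, h2⟩ := main a ha u hu
    have := one_sub_norm_sq_pos ha
    rw [hy]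
    exact mul_le_mul_of_nonneg_right
      (Real.rpow_le_rpow_of_nonpos (hlo.trans_le h1) h2 hα) (by positivity)

/-- Lebesgue measure transported by `chart a` is dominated by the weighted measure on a
Bergman ball, with the natural power of `1-|a|²`. -/
lemma exists_smul_map_chart_le (n : ℕ) {α r : ℝ} (hα : -1 < α) (hr : 0 < r) :
    ∃ κ > (0 : ℝ), ∀ a : En n, ‖a‖ < 1 →
      ENNReal.ofReal (κ * (1 - ‖a‖ ^ 2) ^ ((n : ℝ) + 1 + α)) •
          Measure.map (chart a) (volume.restrict (chartBall a (Real.tanh r))) ≤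
        (wMeas n α).restrict (bergmanBall a r) := by
  obtain ⟨κ, hκ, hle⟩ := exists_mul_rpow_le_rpow_chart n α (tanh_pos hr)
    (Real.tanh_lt_one r)
  have hc : 0 < volConst n α := by
    have h1 : 0 < Real.Gamma (n + 1 + α) := Real.Gamma_pos_of_pos (by
      have : (0 : ℝ) ≤ n := n.cast_nonneg
      linarith)
    have h2 : 0 < Real.Gamma (α + 1) := Real.Gamma_pos_of_pos (by linarith)
    have h3 : (0 : ℝ) < n.factorial := by exact_mod_cast n.factorial_pos
    unfold volConst
    positivity
  set V := volume (ball (0 : En n) 1)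
  have hVtop : V ≠ ⊤ := measure_ball_lt_top.ne
  have hV0 : V ≠ 0 := (measure_ball_pos _ _ one_pos).ne'
  have hVpos : 0 < V.toReal := ENNReal.toReal_pos hV0 hVtop
  refine ⟨volConst n α * κ / V.toReal, by positivity, fun a ha => ?_⟩
  have hσ := one_sub_norm_sq_pos ha
  set σ := 1 - ‖a‖ ^ 2
  have hB : MeasurableSet (bergmanBall a r) := (isOpen_bergmanBall ha r).measurableSet
  have hsub : bergmanBall a r ⊆ ball 0 1 := fun w hw => hw.1
  have hleft : Measure.map (chart a) (volume.restrict (chartBall a (Real.tanh r))) =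
      ENNReal.ofReal ((σ ^ (n + 1))⁻¹) • volume.restrict (bergmanBall a r) := by
    rw [← chart_preimage_bergmanBall ha, ← Measure.restrict_map
      (differentiable_chart a).continuous.measurable hB, map_chart_volume ha,
      Measure.restrict_smul]
  have hv : (vMeas n).restrict (bergmanBall a r) = V⁻¹ • volume.restrict (bergmanBall a r) := by
    rw [vMeas, Measure.restrict_smul, Measure.restrict_restrict hB,
      Set.inter_eq_left.2 hsub]
  have hVinv : V⁻¹ = ENNReal.ofReal (V.toReal⁻¹) := by
    rw [ENNReal.ofReal_inv_of_pos hVpos, ENNReal.ofReal_toReal hVtop]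
  have hright : ENNReal.ofReal (volConst n α * (κ * σ ^ α)) •
      (vMeas n).restrict (bergmanBall a r) ≤ (wMeas n α).restrict (bergmanBall a r) := by
    rw [wMeas, restrict_withDensity hB, ← withDensity_const]
    refine withDensity_mono ((ae_restrict_iff' hB).2 (Eventually.of_forall fun w hw => ?_))
    obtain ⟨u, rfl⟩ := (chartHomeo ha).surjective w
    rw [coe_chartHomeo] at hw ⊢
    exact ENNReal.ofReal_le_ofReal
      (mul_le_mul_of_nonneg_left (hle a ha u ((chart_mem_bergmanBall_iff ha).1 hw)) hc.le)
  refine le_trans (le_of_eq ?_) hright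
  rw [hleft, hv, smul_smul, smul_smul, hVinv, ← ENNReal.ofReal_mul (by positivity),
    ← ENNReal.ofReal_mul (by positivity)]
  congr 2
  rw [Real.rpow_add hσ, ← Nat.cast_succ, Real.rpow_natCast]
  field_simp

lemma exists_volume_chartBall_le (n : ℕ) {R : ℝ} (hR0 : 0 < R) (hR : R < 1) :
    ∃ K > (0 : ℝ), ∀ a : En n, ‖a‖ < 1 → volume (chartBall a R) ≤ ENNReal.ofReal K := by
  have hRR : 0 < R / (1 - R) := div_pos hR0 (by linarith)
  have hKtop : volume (closedBall (0 : En n) (R / (1 - R))) ≠ ⊤ := measure_closedBall_lt_top.ne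
  refine ⟨(volume (closedBall (0 : En n) (R / (1 - R)))).toReal,
    ENNReal.toReal_pos (measure_closedBall_pos _ _ hRR).ne' hKtop, fun a ha => ?_⟩
  rw [ENNReal.ofReal_toReal hKtop]
  exact measure_mono fun u hu => by simpa using (chartBall_bounds ha hR0 hR hu).2.2

/-- The values of a holomorphic function on a Bergman ball are bounded by a multiple of its
mean over a larger concentric ball, expressed in the chart. -/
lemma exists_enorm_mul_le_lintegral_chart (n : ℕ) {r r' : ℝ} (hr : 0 < r) (hrr' : r < r') :
    ∃ v > (0 : ℝ), ∀ a : En n, ‖a‖ < 1 → ∀ g : En n → ℂ,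
      DifferentiableOn ℂ g (bergmanBall a r') → ∀ w ∈ bergmanBall a r,
        ‖g w‖ₑ * ENNReal.ofReal v ≤
          ∫⁻ u in chartBall a (Real.tanh r'), ‖g (chart a u)‖ₑ := by
  have hR0 := tanh_pos hr
  have hRR' : Real.tanh r < Real.tanh r' := tanh_lt_tanh hrr'
  have hR' := Real.tanh_lt_one r'
  set ε := (Real.tanh r' - Real.tanh r) / 8 with hε
  have hε0 : 0 < ε := by rw [hε]; linarith
  refine ⟨(volume (ball (0 : En n) ε)).toReal,
    ENNReal.toReal_pos (measure_ball_pos _ _ hε0).ne' measure_ball_lt_top.ne,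
    fun a ha g hg w hw => ?_⟩
  obtain ⟨u, rfl⟩ := (chartHomeo ha).surjective w
  rw [coe_chartHomeo] at hw ⊢
  have hsub : ball u ε ⊆ chartBall a (Real.tanh r') :=
    ball_subset_chartBall ha hR0 hRR' hR' ((chart_mem_bergmanBall_iff ha).1 hw)
  have hh : DifferentiableOn ℂ (g ∘ chart a) (ball u ε) :=
    hg.comp (differentiable_chart a).differentiableOn fun x hx =>
      (chart_mem_bergmanBall_iff ha).2 (hsub hx)
  rw [ENNReal.ofReal_toReal measure_ball_lt_top.ne,
    ← Measure.addHaar_ball_center (volume : Measure (En n)) u ε]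
  exact (enorm_mul_volume_ball_le hh).trans (lintegral_mono_set hsub)

/-- Pointwise evaluation on a smaller Bergman ball is bounded on the Bergman space of a larger
concentric one, with the natural power of `1-|a|²`. -/
lemma exists_enorm_le_eLpNorm (n : ℕ) {p α r r' : ℝ} (hα : -1 < α) (hp : 1 ≤ p) (hr : 0 < r)
    (hrr' : r < r') :
    ∃ C > (0 : ℝ), ∀ a : En n, ‖a‖ < 1 → ∀ g : En n → ℂ,
      DifferentiableOn ℂ g (bergmanBall a r') → ∀ w ∈ bergmanBall a r,
        ‖g w‖ₑ ≤ ENNReal.ofReal (C * (1 - ‖a‖ ^ 2) ^ (-(((n : ℝ) + 1 + α) / p))) *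
          eLpNorm g (ENNReal.ofReal p) ((wMeas n α).restrict (bergmanBall a r')) := by
  have hp0 : 0 < p := by linarith
  have hptop : ENNReal.ofReal p ≠ ⊤ := ENNReal.ofReal_ne_top
  obtain ⟨κ, hκ, hle⟩ := exists_smul_map_chart_le n hα (hr.trans hrr')
  obtain ⟨v, hv0, hmean⟩ := exists_enorm_mul_le_lintegral_chart n hr hrr'
  obtain ⟨K, hK0, hK⟩ := exists_volume_chartBall_le n (tanh_pos (hr.trans hrr'))
    (Real.tanh_lt_one r')
  set R' := Real.tanh r'
  refine ⟨v⁻¹ * K ^ (1 - 1 / p) * κ ^ (-(1 / p)), by positivity, fun a ha g hg w hw => ?_⟩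
  have hσ := one_sub_norm_sq_pos ha
  have hh : DifferentiableOn ℂ (g ∘ chart a) (chartBall a R') := by
    refine hg.comp (differentiable_chart a).differentiableOn fun x hx => ?_
    exact (chart_mem_bergmanBall_iff ha).2 hx
  set E := eLpNorm (g ∘ chart a) (ENNReal.ofReal p) (volume.restrict (chartBall a R'))
  set N := eLpNorm g (ENNReal.ofReal p) ((wMeas n α).restrict (bergmanBall a r'))
  set c := κ * (1 - ‖a‖ ^ 2) ^ ((n : ℝ) + 1 + α) with hc
  have hc0 : 0 < c := by positivity
  have hwE : ‖g w‖ₑ * ENNReal.ofReal v ≤ E * ENNReal.ofReal (K ^ (1 - 1 / p)) := by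
    have hexp : 0 ≤ 1 - 1 / p := by
      rw [sub_nonneg, div_le_one hp0]
      exact hp
    calc ‖g w‖ₑ * ENNReal.ofReal v
        ≤ eLpNorm (g ∘ chart a) 1 (volume.restrict (chartBall a R')) := by
          rw [eLpNorm_one_eq_lintegral_enorm]
          exact hmean a ha g hg w hw
      _ ≤ E * volume (chartBall a R') ^ (1 - 1 / p) := by
          refine (eLpNorm_le_eLpNorm_mul_rpow_measure_univ (q := ENNReal.ofReal p)
            (by simpa using hp) (hh.continuousOn.aestronglyMeasurable
              (isOpen_chartBall a R').measurableSet)).trans (le_of_eq ?_)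
          rw [Measure.restrict_apply_univ, ENNReal.toReal_ofReal hp0.le, ENNReal.toReal_one,
            div_one]
      _ ≤ _ := by
          rw [← ENNReal.ofReal_rpow_of_pos hK0]
          gcongr
          exact hK a ha
  have hcomp : ENNReal.ofReal (c ^ (1 / p)) * E ≤ N := by
    have h := eLpNorm_mono_measure g (p := ENNReal.ofReal p) (hle a ha)
    have hemb : MeasurableEmbedding (chart a) :=
      (chartHomeo ha).measurableEmbedding
    rw [eLpNorm_smul_measure_of_ne_top hptop, hemb.eLpNorm_map_measure,
      ENNReal.toReal_div, ENNReal.toReal_one, ENNReal.toReal_ofReal hp0.le,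
      ENNReal.ofReal_rpow_of_pos hc0, smul_eq_mul] at h
    exact h
  have hcE : E ≤ ENNReal.ofReal (c ^ (-(1 / p))) * N := by
    calc E = ENNReal.ofReal (c ^ (-(1 / p))) * (ENNReal.ofReal (c ^ (1 / p)) * E) := by
          rw [← mul_assoc, ← ENNReal.ofReal_mul (by positivity), ← Real.rpow_add hc0]
          simp
      _ ≤ _ := by gcongr
  calc ‖g w‖ₑ
      = ENNReal.ofReal v⁻¹ * (‖g w‖ₑ * ENNReal.ofReal v) := by
        rw [mul_left_comm, ← ENNReal.ofReal_mul (by positivity), inv_mul_cancel₀ hv0.ne']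
        simp
    _ ≤ ENNReal.ofReal v⁻¹ * (ENNReal.ofReal (c ^ (-(1 / p))) * N *
          ENNReal.ofReal (K ^ (1 - 1 / p))) :=
        mul_le_mul' le_rfl (hwE.trans (by gcongr))
    _ = ENNReal.ofReal (v⁻¹ * K ^ (1 - 1 / p) * c ^ (-(1 / p))) * N := by
        rw [ENNReal.ofReal_mul (by positivity), ENNReal.ofReal_mul (by positivity)]
        ring
    _ = _ := by
        rw [hc, Real.mul_rpow hκ.le (by positivity), ← Real.rpow_mul hσ.le, ← mul_assoc]
        congr 4
        ring

end Evaluation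

lemma bergmanBall_subset {n : ℕ} (a : En n) {r r' : ℝ} (h : r ≤ r') :
    bergmanBall a r ⊆ bergmanBall a r' := fun _ hw => ⟨hw.1, hw.2.trans_le h⟩

/-- For a linear functional of norm at most `M`, the sum of its absolute values over a finite
family is at most `M` times the weak `ℓ¹` norm of the family. -/
lemma sum_norm_apply_le_mul_iSup {X : Type*} [NormedAddCommGroup X] [NormedSpace ℂ X]
    {M : ℝ} (hM : 0 < M) (L : X →ₗ[ℂ] ℂ) (hL : ∀ x, ‖L x‖ ≤ M * ‖x‖) {m : ℕ} (x : Fin m → X) :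
    ∑ k, ‖L (x k)‖ ≤
      M * ⨆ φ : {φ : X →L[ℂ] ℂ // ‖φ‖ ≤ 1}, (∑ k, ‖φ.1 (x k)‖ ^ (1 : ℝ)) ^ (1 / 1 : ℝ) := by
  have hbdd : BddAbove (Set.range fun φ : {φ : X →L[ℂ] ℂ // ‖φ‖ ≤ 1} =>
      (∑ k, ‖φ.1 (x k)‖ ^ (1 : ℝ)) ^ (1 / 1 : ℝ)) := by
    refine ⟨∑ k, ‖x k‖, ?_⟩
    rintro _ ⟨φ, rfl⟩
    simp only [Real.rpow_one, div_one]
    exact Finset.sum_le_sum fun k _ => (φ.1.le_of_opNorm_le φ.2 _).trans (by simp)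
  let ψ : X →L[ℂ] ℂ := ((M⁻¹ : ℝ) : ℂ) • L.mkContinuous M hL
  have hψ : ‖ψ‖ ≤ 1 := by
    have h1 := L.mkContinuous_norm_le hM.le hL
    calc ‖ψ‖ = M⁻¹ * ‖L.mkContinuous M hL‖ := by
          rw [norm_smul, Complex.norm_real, Real.norm_of_nonneg (by positivity)]
      _ ≤ M⁻¹ * M := by gcongr
      _ = 1 := inv_mul_cancel₀ hM.ne'
  have h := le_ciSup hbdd ⟨ψ, hψ⟩
  calc ∑ k, ‖L (x k)‖ = M * (∑ k, ‖ψ (x k)‖ ^ (1 : ℝ)) ^ (1 / 1 : ℝ) := by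
        simp only [Real.rpow_one, div_one, Finset.mul_sum]
        refine Finset.sum_congr rfl fun k _ => ?_
        have : ψ (x k) = ((M⁻¹ : ℝ) : ℂ) * L (x k) := rfl
        rw [this, norm_mul, Complex.norm_real, Real.norm_of_nonneg (by positivity),
          mul_inv_cancel_left₀ hM.ne']
    _ ≤ _ := by gcongr

/-- Holomorphic functions which agree almost everywhere agree wherever evaluation is
bounded. -/
lemma eq_of_ae_eq_of_eval_bound {n : ℕ} {P : ℝ≥0∞} {Ω A : Set (En n)} {ν : Measure (En n)}
    {M : ℝ}
    (hA : ∀ g : En n → ℂ, DifferentiableOn ℂ g Ω → ∀ w ∈ A,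
      ‖g w‖ₑ ≤ ENNReal.ofReal M * eLpNorm g P ν) {f g : En n → ℂ}
    (hf : DifferentiableOn ℂ f Ω) (hg : DifferentiableOn ℂ g Ω) (hfg : f =ᵐ[ν] g) {w : En n}
    (hw : w ∈ A) : f w = g w := by
  have h := hA _ (hf.sub hg) w hw
  have h0 : eLpNorm (f - g) P ν = 0 := by
    have : f - g =ᵐ[ν] 0 := hfg.mono fun x hx => by simp [hx]
    rw [eLpNorm_congr_ae this, eLpNorm_zero]
  rw [h0, mul_zero, nonpos_iff_eq_zero, enorm_eq_zero] at h
  exact sub_eq_zero.1 h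

section Restriction

variable {n : ℕ} {P : ℝ≥0∞} [Fact (1 ≤ P)] {Ω : Set (En n)} {ν : Measure (En n)}

/-- A holomorphic representative of an element of `holoSubmodule`. -/
def holoRep (F : holoSubmodule n P Ω ν) : En n → ℂ := F.2.choose

lemma differentiableOn_holoRep (F : holoSubmodule n P Ω ν) :
    DifferentiableOn ℂ (holoRep F) Ω := F.2.choose_spec.1

lemma coeFn_ae_eq_holoRep (F : holoSubmodule n P Ω ν) :
    ((F : Lp ℂ P ν) : En n → ℂ) =ᵐ[ν] holoRep F := F.2.choose_spec.2

lemma eLpNorm_holoRep (F : holoSubmodule n P Ω ν) :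
    eLpNorm (holoRep F) P ν = ENNReal.ofReal ‖F‖ := by
  rw [← eLpNorm_congr_ae (coeFn_ae_eq_holoRep F), Submodule.coe_norm, Lp.norm_def,
    ENNReal.ofReal_toReal (Lp.eLpNorm_ne_top _)]

variable {A : Set (En n)} {M : ℝ}

lemma norm_holoRep_le (hM : 0 ≤ M)
    (hA : ∀ g : En n → ℂ, DifferentiableOn ℂ g Ω → ∀ w ∈ A,
      ‖g w‖ₑ ≤ ENNReal.ofReal M * eLpNorm g P ν) (F : holoSubmodule n P Ω ν) {w : En n}
    (hw : w ∈ A) : ‖holoRep F w‖ ≤ M * ‖F‖ := by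
  have h := hA _ (differentiableOn_holoRep F) w hw
  rw [eLpNorm_holoRep, ← ENNReal.ofReal_mul hM, ← ofReal_norm] at h
  exact (ENNReal.ofReal_le_ofReal_iff (by positivity)).1 h

/-- Evaluation of the holomorphic representative at a point, as a linear functional. -/
def holoEval (hA : ∀ g : En n → ℂ, DifferentiableOn ℂ g Ω → ∀ w ∈ A,
      ‖g w‖ₑ ≤ ENNReal.ofReal M * eLpNorm g P ν) {w : En n} (hw : w ∈ A) :
    holoSubmodule n P Ω ν →ₗ[ℂ] ℂ where
  toFun F := holoRep F w
  map_add' F G := by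
    refine eq_of_ae_eq_of_eval_bound (g := holoRep F + holoRep G) hA
      (differentiableOn_holoRep _)
      ((differentiableOn_holoRep F).add (differentiableOn_holoRep G)) ?_ hw
    exact (coeFn_ae_eq_holoRep (F + G)).symm.trans ((Lp.coeFn_add _ _).trans
      ((coeFn_ae_eq_holoRep F).add (coeFn_ae_eq_holoRep G)))
  map_smul' c F := by
    refine eq_of_ae_eq_of_eval_bound (g := c • holoRep F) hA (differentiableOn_holoRep _)
      ((differentiableOn_holoRep F).const_smul c) ?_ hw
    exact (coeFn_ae_eq_holoRep (c • F)).symm.trans ((Lp.coeFn_smul _ _).trans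
      ((coeFn_ae_eq_holoRep F).const_smul c))

variable {Q : ℝ≥0∞} {μ : Measure (En n)} {B : Set (En n)}

lemma memLp_holoRep (hM : 0 ≤ M)
    (hA : ∀ g : En n → ℂ, DifferentiableOn ℂ g Ω → ∀ w ∈ A,
      ‖g w‖ₑ ≤ ENNReal.ofReal M * eLpNorm g P ν)
    (hB : MeasurableSet B) (hBA : B ⊆ A) (hAΩ : A ⊆ Ω) (hμ : μ B < ⊤)
    (F : holoSubmodule n P Ω ν) : MemLp (holoRep F) Q (μ.restrict B) := by
  have : IsFiniteMeasure (μ.restrict B) := ⟨by simpa using hμ⟩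
  refine MemLp.of_bound (((differentiableOn_holoRep F).continuousOn.mono
    (hBA.trans hAΩ)).aestronglyMeasurable hB) (M * ‖F‖) ?_
  exact (ae_restrict_iff' hB).2 (Eventually.of_forall fun w hw =>
    norm_holoRep_le hM hA F (hBA hw))

/-- The restriction operator from a space of holomorphic functions into `L^Q(B, μ)`. -/
def restrictionOp (hM : 0 ≤ M)
    (hA : ∀ g : En n → ℂ, DifferentiableOn ℂ g Ω → ∀ w ∈ A,
      ‖g w‖ₑ ≤ ENNReal.ofReal M * eLpNorm g P ν)
    (hB : MeasurableSet B) (hBA : B ⊆ A) (hAΩ : A ⊆ Ω) (hμ : μ B < ⊤) :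
    holoSubmodule n P Ω ν →ₗ[ℂ] Lp ℂ Q (μ.restrict B) where
  toFun F := (memLp_holoRep hM hA hB hBA hAΩ hμ F).toLp
  map_add' F G := by
    rw [← MemLp.toLp_add]
    refine MemLp.toLp_congr _ _ ((ae_restrict_iff' hB).2 (Eventually.of_forall fun w hw => ?_))
    exact (holoEval hA (hBA hw)).map_add F G
  map_smul' c F := by
    rw [RingHom.id_apply, ← MemLp.toLp_const_smul]
    refine MemLp.toLp_congr _ _ ((ae_restrict_iff' hB).2 (Eventually.of_forall fun w hw => ?_))
    exact (holoEval hA (hBA hw)).map_smul c F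

lemma coeFn_restrictionOp (hM : 0 ≤ M)
    (hA : ∀ g : En n → ℂ, DifferentiableOn ℂ g Ω → ∀ w ∈ A,
      ‖g w‖ₑ ≤ ENNReal.ofReal M * eLpNorm g P ν)
    (hB : MeasurableSet B) (hBA : B ⊆ A) (hAΩ : A ⊆ Ω) (hμ : μ B < ⊤)
    (F : holoSubmodule n P Ω ν) :
    (restrictionOp (Q := Q) hM hA hB hBA hAΩ hμ F : En n → ℂ) =ᵐ[μ.restrict B] holoRep F :=
  (memLp_holoRep hM hA hB hBA hAΩ hμ F).coeFn_toLp

lemma norm_restrictionOp_le (hM : 0 ≤ M)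
    (hA : ∀ g : En n → ℂ, DifferentiableOn ℂ g Ω → ∀ w ∈ A,
      ‖g w‖ₑ ≤ ENNReal.ofReal M * eLpNorm g P ν)
    (hB : MeasurableSet B) (hBA : B ⊆ A) (hAΩ : A ⊆ Ω) (hμ : μ B < ⊤)
    (F : holoSubmodule n P Ω ν) {b : ℝ} (hb : 0 ≤ b) (hFb : ∀ w ∈ B, ‖holoRep F w‖ ≤ b) :
    ‖restrictionOp (Q := Q) hM hA hB hBA hAΩ hμ F‖ ≤ (μ B).toReal ^ (1 / Q.toReal) * b := by
  have h := eLpNorm_le_of_ae_bound (p := Q) ((ae_restrict_iff' (μ := μ) hB).2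
    (Eventually.of_forall hFb))
  rw [Measure.restrict_apply_univ] at h
  have : ‖restrictionOp (Q := Q) hM hA hB hBA hAΩ hμ F‖ =
      (eLpNorm (holoRep F) Q (μ.restrict B)).toReal :=
    Lp.norm_toLp _ (memLp_holoRep hM hA hB hBA hAΩ hμ F)
  rw [this]
  refine (ENNReal.toReal_mono (ENNReal.mul_ne_top (ENNReal.rpow_ne_top_of_nonneg
    (by positivity) hμ.ne) ENNReal.ofReal_ne_top) h).trans (le_of_eq ?_)
  rw [ENNReal.toReal_mul, ENNReal.toReal_rpow, ENNReal.toReal_ofReal hb, one_div]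

end Restriction

theorem statement6 (n : ℕ) (hn : 1 ≤ n) (p q α δ : ℝ)
    (hα : -1 < α) (hp : 1 ≤ p) (hq : 1 ≤ q) (hδ : 0 < δ)
    [Fact (1 ≤ ENNReal.ofReal p)] [Fact (1 ≤ ENNReal.ofReal q)] :
    ∃ C > (0 : ℝ), ∀ a : ℕ → En n, IsLattice a δ →
      ∀ μ : Measure (En n), μ (unitBall n)ᶜ = 0 → ∀ k : ℕ,
        ENNReal.ofReal ((1 - ‖a k‖ ^ 2) ^ (-(((n : ℝ) + 1 + α) * q / p))) *
            μ (bergmanBall (a k) δ) < ⊤ →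
          ∃ S : ↥(holoSubmodule n (ENNReal.ofReal p) (bergmanBall (a k) (3 * δ))
                ((wMeas n α).restrict (bergmanBall (a k) (3 * δ)))) →ₗ[ℂ]
              Lp ℂ (ENNReal.ofReal q) (μ.restrict (bergmanBall (a k) δ)),
            RepRestriction n p q α δ μ (a k) ⇑S ∧
              SummingBoundWith 1 1 ⇑S
                (C * (1 - ‖a k‖ ^ 2) ^ (-(((n : ℝ) + 1 + α) / p)) *
                  (μ (bergmanBall (a k) δ)).toReal ^ (1 / q)) := by
  obtain ⟨C₀, hC₀, hpt⟩ := exists_enorm_le_eLpNorm n hα hp (r := 2 * δ) (r' := 3 * δ)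
    (by linarith) (by linarith)
  obtain ⟨v, hv, hmean⟩ := exists_enorm_mul_le_lintegral_chart n (r := δ) (r' := 2 * δ) hδ
    (by linarith)
  set R := Real.tanh (2 * δ)
  have hR0 : 0 < R := tanh_pos (by linarith)
  obtain ⟨K, hK0, hK⟩ := exists_volume_chartBall_le n hR0 (Real.tanh_lt_one (2 * δ))
  refine ⟨v⁻¹ * K * C₀, by positivity, fun a hlat μ _ k hfin => ?_⟩
  have ha : ‖a k‖ < 1 := by simpa [unitBall] using hlat.1 k
  generalize a k = a at ha hfin
  have hσ := one_sub_norm_sq_pos ha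
  set M := C₀ * (1 - ‖a‖ ^ 2) ^ (-(((n : ℝ) + 1 + α) / p)) with hMdef
  have hM : 0 < M := by positivity
  have hμ : μ (bergmanBall a δ) < ⊤ := by
    refine lt_top_iff_ne_top.2 fun h => hfin.ne ?_
    rw [h]
    exact ENNReal.mul_top (ENNReal.ofReal_pos.2 (by positivity)).ne'
  have hA := hpt a ha
  have hB : MeasurableSet (bergmanBall a δ) := (isOpen_bergmanBall ha δ).measurableSet
  have hBA : bergmanBall a δ ⊆ bergmanBall a (2 * δ) := bergmanBall_subset a (by linarith)
  have hAΩ : bergmanBall a (2 * δ) ⊆ bergmanBall a (3 * δ) := bergmanBall_subset a (by linarith)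
  refine ⟨restrictionOp hM.le hA hB hBA hAΩ hμ, fun F g hg hFg => ?_, fun m x => ?_⟩
  · refine (coeFn_restrictionOp hM.le hA hB hBA hAΩ hμ F).trans
      ((ae_restrict_iff' hB).2 (Eventually.of_forall fun w hw => ?_))
    exact eq_of_ae_eq_of_eval_bound hA (differentiableOn_holoRep F) hg
      ((coeFn_ae_eq_holoRep F).symm.trans hFg) (hBA hw)
  · set W := ⨆ φ : {φ : ↥(holoSubmodule n (ENNReal.ofReal p) (bergmanBall a (3 * δ))
        ((wMeas n α).restrict (bergmanBall a (3 * δ)))) →L[ℂ] ℂ // ‖φ‖ ≤ 1},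
        (∑ k, ‖φ.1 (x k)‖ ^ (1 : ℝ)) ^ (1 / 1 : ℝ) with hW
    have hsum : ∀ w ∈ bergmanBall a (2 * δ), ∑ j, ‖holoRep (x j) w‖ ≤ M * W := fun w hw =>
      sum_norm_apply_le_mul_iSup hM (holoEval hA hw)
        (fun F => norm_holoRep_le hM.le hA F hw) x
    have hW0 : 0 ≤ W := Real.iSup_nonneg fun φ => by positivity
    let I : Fin m → ℝ≥0∞ := fun j => ∫⁻ u in chartBall a R, ‖holoRep (x j) (chart a u)‖ₑ
    have hU : MeasurableSet (chartBall a R) := (isOpen_chartBall a R).measurableSet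
    have hchart : ∀ u ∈ chartBall a R, chart a u ∈ bergmanBall a (2 * δ) := fun u hu =>
      (chart_mem_bergmanBall_iff ha).2 hu
    have hI : ∑ j, I j ≤ ENNReal.ofReal (M * W * K) := by
      calc ∑ j, I j = ∫⁻ u in chartBall a R, ∑ j, ‖holoRep (x j) (chart a u)‖ₑ := by
            refine (lintegral_finsetSum' _ fun j _ => ?_).symm
            refine ContinuousOn.aemeasurable (ContinuousOn.enorm ?_) hU
            exact (differentiableOn_holoRep (x j)).continuousOn.comp
              (differentiable_chart a).continuous.continuousOn fun u hu => hAΩ (hchart u hu)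
        _ ≤ ∫⁻ u in chartBall a R, ENNReal.ofReal (M * W) := by
            refine setLIntegral_mono' hU fun u hu => ?_
            simp_rw [← ofReal_norm]
            rw [← ENNReal.ofReal_sum_of_nonneg fun _ _ => norm_nonneg _]
            exact ENNReal.ofReal_le_ofReal (hsum _ (hchart u hu))
        _ ≤ _ := by
            rw [setLIntegral_const, ENNReal.ofReal_mul (p := M * W) (by positivity)]
            gcongr
            exact hK a ha
    have hItop : ∀ j, I j ≠ ⊤ := fun j => ne_top_of_le_ne_top ENNReal.ofReal_ne_top
      ((Finset.single_le_sum (fun _ _ => zero_le) (Finset.mem_univ j)).trans hI)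
    have hIreal : ∑ j, (I j).toReal ≤ M * W * K := by
      rw [← ENNReal.toReal_sum fun j _ => hItop j]
      exact ENNReal.toReal_le_of_le_ofReal (by positivity) hI
    have hsup : ∀ j, ∀ w ∈ bergmanBall a δ, ‖holoRep (x j) w‖ ≤ v⁻¹ * (I j).toReal := by
      intro j w hw
      have h := ENNReal.toReal_mono (hItop j)
        (hmean a ha _ ((differentiableOn_holoRep (x j)).mono hAΩ) w hw)
      rw [ENNReal.toReal_mul, toReal_enorm, ENNReal.toReal_ofReal hv.le] at h
      rw [inv_mul_eq_div, le_div_iff₀ hv]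
      exact h
    simp only [Real.rpow_one, div_one]
    calc ∑ j, ‖restrictionOp hM.le hA hB hBA hAΩ hμ (x j)‖
        ≤ ∑ j, (μ (bergmanBall a δ)).toReal ^ (1 / q) * (v⁻¹ * (I j).toReal) := by
          refine Finset.sum_le_sum fun j _ => ?_
          have h := norm_restrictionOp_le (Q := ENNReal.ofReal q) hM.le hA hB hBA hAΩ hμ (x j)
            (b := v⁻¹ * (I j).toReal) (by positivity) (hsup j)
          rwa [ENNReal.toReal_ofReal (by linarith)] at h
      _ = (μ (bergmanBall a δ)).toReal ^ (1 / q) * (v⁻¹ * ∑ j, (I j).toReal) := by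
          rw [Finset.mul_sum, Finset.mul_sum]
      _ ≤ (μ (bergmanBall a δ)).toReal ^ (1 / q) * (v⁻¹ * (M * W * K)) := by gcongr
      _ = _ := by
          simp only [hMdef, hW, Real.rpow_one, div_one]
          ring
end
end
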